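/- arXiv:1608.06868 — 2 statements merged into one kernel-verified Lean document; each statement's English description precedes it below -/
import Mathlib

section
/- Let n ≥ 2 with smallest prime factor p = P₁(n), and suppose p ≤ n−2. Then there exist two distinct p-element subsets of the n-th roots of unity with equal sums, and for every k with 1 ≤ k < p there do NOT exist two distinct k-element subsets of the n-th roots of unity with equal sums. -/
/-!
Conjugating an equality between two sums of `n`-th roots of unity by the Galois automorphisms
`ζ ↦ ζ ^ r`, `r` coprime to `n`, gives equality of the `r`-th power sums. All `r` with
`1 ≤ r < P₁(n)` are coprime to `n`, so if both sums have fewer than `P₁(n)` terms, Newton's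
identities show that all elementary symmetric functions of the terms agree, hence so do the terms.
In the other direction, if `P₁(n) < n` then the group of `P₁(n)`-th roots of unity has at least two
cosets in `μ_n`, and each of them sums to zero.
-/

open Finset Polynomial

section PowerSums

variable {R : Type*} [CommRing R]

theorem mul_multiset_esymm_eq_sum (s : Multiset R) (m : ℕ) :
    m * s.esymm m = (-1) ^ (m + 1) * ∑ a ∈ antidiagonal m with a.1 < m,
      (-1) ^ a.1 * s.esymm a.1 * (s.map (· ^ a.2)).sum := by
  classical
  have newton := congrArg (MvPolynomial.aeval fun x : s ↦ (x : R))
    (MvPolynomial.mul_esymm_eq_sum s ℤ m)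
  have sum_coe_pow (r : ℕ) : ∑ x : s, (x : R) ^ r = (s.map (· ^ r)).sum :=
    congrArg Multiset.sum (Multiset.map_univ s (· ^ r))
  simpa only [map_mul, map_natCast, map_sum, map_pow, map_neg, map_one, MvPolynomial.psum,
    MvPolynomial.aeval_X, MvPolynomial.aeval_esymm_eq_multiset_esymm, Multiset.map_univ_coe,
    sum_coe_pow] using newton

/- Newton's identities never involve the power sum of exponent `0`, so `s` and `t` may have
different cardinalities. -/
theorem multiset_esymm_eq_of_sum_pow_eq [IsAddTorsionFree R] {s t : Multiset R} {m : ℕ}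
    (h : ∀ r, 1 ≤ r → r ≤ m → (s.map (· ^ r)).sum = (t.map (· ^ r)).sum) :
    s.esymm m = t.esymm m := by
  induction m using Nat.strong_induction_on with
  | _ m ih =>
    obtain rfl | hm := eq_or_ne m 0
    · simp [Multiset.esymm]
    apply nsmul_right_injective hm
    simp only [nsmul_eq_mul, mul_multiset_esymm_eq_sum]
    congr 1
    refine sum_congr rfl fun ⟨a, b⟩ hab ↦ ?_
    obtain ⟨hab, ham⟩ : a + b = m ∧ a < m := by simpa using hab
    rw [ih a ham fun r h₁ h₂ ↦ h r h₁ (h₂.trans ham.le), h b (by lia) (by lia)]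

theorem multiset_esymm_eq_zero_of_card_lt {s : Multiset R} {m : ℕ} (h : s.card < m) :
    s.esymm m = 0 := by
  simp [Multiset.esymm, Multiset.powersetCard_eq_empty m h]

variable [IsDomain R]

theorem card_le_card_of_multiset_esymm_eq {s t : Multiset R} (hs : 0 ∉ s)
    (h : s.esymm s.card = t.esymm s.card) : s.card ≤ t.card := by
  by_contra! hlt
  rw [multiset_esymm_eq_zero_of_card_lt hlt] at h
  exact hs (Multiset.prod_eq_zero_iff.mp (by simpa [Multiset.esymm] using h))

theorem multiset_eq_of_card_eq_of_esymm_eq {s t : Multiset R} (hcard : s.card = t.card)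
    (h : ∀ m ≤ s.card, s.esymm m = t.esymm m) : s = t := by
  rw [← roots_multiset_prod_X_sub_C s, ← roots_multiset_prod_X_sub_C t,
    Multiset.prod_X_sub_X_eq_sum_esymm, Multiset.prod_X_sub_X_eq_sum_esymm, ← hcard]
  congr 1
  exact sum_congr rfl fun m hm ↦ by rw [h m (mem_range_succ_iff.mp hm)]

theorem multiset_eq_of_sum_pow_eq [IsAddTorsionFree R] {s t : Multiset R} {k : ℕ}
    (hs : 0 ∉ s) (ht : 0 ∉ t) (hsk : s.card ≤ k) (htk : t.card ≤ k)
    (h : ∀ r, 1 ≤ r → r ≤ k → (s.map (· ^ r)).sum = (t.map (· ^ r)).sum) : s = t := by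
  have hesymm : ∀ m ≤ k, s.esymm m = t.esymm m := fun m hm ↦
    multiset_esymm_eq_of_sum_pow_eq fun r h₁ h₂ ↦ h r h₁ (h₂.trans hm)
  have hcard : s.card = t.card :=
    (card_le_card_of_multiset_esymm_eq hs (hesymm _ hsk)).antisymm
      (card_le_card_of_multiset_esymm_eq ht (hesymm _ htk).symm)
  exact multiset_eq_of_card_eq_of_esymm_eq hcard fun m hm ↦ hesymm m (hm.trans hsk)

end PowerSums

section RootsOfUnity

variable {R : Type*} [CommRing R] [IsDomain R] {n : ℕ}

variable (R n) in
theorem exists_isPrimitiveRoot_dvd_and_pow_eq [NeZero n] :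
    ∃ (d : ℕ) (ζ : R), d ∣ n ∧ IsPrimitiveRoot ζ d ∧ ∀ z : R, z ^ n = 1 → ∃ i : ℕ, ζ ^ i = z := by
  obtain ⟨g, hg⟩ := IsCyclic.exists_monoid_generator (α := rootsOfUnity n R)
  refine ⟨orderOf g, ((g : Rˣ) : R), ?_, ?_, fun z hz ↦ ?_⟩
  · exact orderOf_dvd_of_pow_eq_one (Subtype.ext g.2)
  · rw [IsPrimitiveRoot.coe_units_iff, IsPrimitiveRoot.coe_submonoidClass_iff]
    exact IsPrimitiveRoot.orderOf g
  · obtain ⟨i, hi⟩ := Submonoid.mem_powers_iff _ _ |>.mp (hg (rootsOfUnity.mkOfPowEq z hz))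
    exact ⟨i, by simpa using congrArg (fun u : rootsOfUnity n R ↦ ((u : Rˣ) : R)) hi⟩

theorem aeval_pow_eq_of_coprime [CharZero R] {ζ : R} (hζ : IsPrimitiveRoot ζ n)
    {r : ℕ} (hr : r.Coprime n) {P Q : ℤ[X]} (h : aeval ζ P = aeval ζ Q) :
    aeval (ζ ^ r) P = aeval (ζ ^ r) Q := by
  obtain rfl | hn := n.eq_zero_or_pos
  · rwa [Nat.coprime_zero_right r |>.mp hr, pow_one]
  rw [← sub_eq_zero, ← map_sub] at h ⊢
  have hdvd := minpoly.isIntegrallyClosed_dvd (hζ.isIntegral hn) h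
  rw [hζ.minpoly_eq_pow_coprime hr] at hdvd
  exact aeval_eq_zero_of_dvd_aeval_eq_zero hdvd (minpoly.aeval ℤ (ζ ^ r))

theorem sum_pow_eq_of_sum_eq_of_coprime [CharZero R] [NeZero n] {s t : Multiset R}
    (hs : ∀ z ∈ s, z ^ n = 1) (ht : ∀ z ∈ t, z ^ n = 1) (h : s.sum = t.sum)
    {r : ℕ} (hr : r.Coprime n) : (s.map (· ^ r)).sum = (t.map (· ^ r)).sum := by
  obtain ⟨d, ζ, hdn, hζ, hpow⟩ := exists_isPrimitiveRoot_dvd_and_pow_eq R n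
  choose! e he using hpow
  have aeval_pow (u : Multiset R) (hu : ∀ z ∈ u, z ^ n = 1) (m : ℕ) :
      aeval (ζ ^ m) (u.map fun z ↦ (X : ℤ[X]) ^ e z).sum = (u.map (· ^ m)).sum := by
    rw [map_multiset_sum, Multiset.map_map]
    refine congrArg Multiset.sum (Multiset.map_congr rfl fun z hz ↦ ?_)
    rw [Function.comp_apply, map_pow, aeval_X, pow_right_comm, he z (hu z hz)]
  rw [← aeval_pow s hs, ← aeval_pow t ht]
  refine aeval_pow_eq_of_coprime hζ (hr.coprime_dvd_right hdn) ?_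
  rw [← pow_one ζ, aeval_pow s hs, aeval_pow t ht]
  simpa only [pow_one, Multiset.map_id'] using h

theorem multiset_eq_of_sum_eq_of_card_lt_minFac [CharZero R] [NeZero n] {s t : Multiset R}
    (hs : ∀ z ∈ s, z ^ n = 1) (ht : ∀ z ∈ t, z ^ n = 1)
    (hsn : s.card < n.minFac) (htn : t.card < n.minFac) (h : s.sum = t.sum) : s = t := by
  have zero_notMem (u : Multiset R) (hu : ∀ z ∈ u, z ^ n = 1) : 0 ∉ u := fun h₀ ↦ by
    simpa [NeZero.ne n] using hu 0 h₀
  refine multiset_eq_of_sum_pow_eq (zero_notMem s hs) (zero_notMem t ht)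
    (Nat.le_sub_one_of_lt hsn) (Nat.le_sub_one_of_lt htn) fun r hr₁ hr₂ ↦ ?_
  have hr : r.Coprime n := (Nat.coprime_of_lt_minFac (by lia) (by lia)).symm
  exact sum_pow_eq_of_sum_eq_of_coprime hs ht h hr

theorem nthRootsFinset_val {ω : R} (hω : IsPrimitiveRoot ω n) {a : R} (ha : a ≠ 0) :
    (nthRootsFinset n a).val = nthRoots n a := by
  classical
  rw [nthRootsFinset_def, Multiset.toFinset_val, (hω.nthRoots_nodup ha).dedup]

theorem card_nthRootsFinset_pow {ω : R} (hω : IsPrimitiveRoot ω n) {α : R} (hα : α ≠ 0) :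
    #(nthRootsFinset n (α ^ n)) = n := by
  rw [card_def, nthRootsFinset_val hω (pow_ne_zero n hα), hω.card_nthRoots, if_pos ⟨α, rfl⟩]

theorem sum_nthRootsFinset_pow_eq_zero {ω : R} (hω : IsPrimitiveRoot ω n) (hn : 1 < n) {α : R}
    (hα : α ≠ 0) : ∑ z ∈ nthRootsFinset n (α ^ n), z = 0 := by
  rw [← sum_map_val, Multiset.map_id', nthRootsFinset_val hω (pow_ne_zero n hα),
    hω.nthRoots_eq rfl, Multiset.sum_map_mul_right]
  exact mul_eq_zero_of_left (hω.geom_sum_eq_zero hn) α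

theorem exists_ne_and_sum_eq_of_dvd {ζ : R} (hζ : IsPrimitiveRoot ζ n) {d : ℕ}
    (hd : 1 < d) (hdn : d ∣ n) (hlt : d < n) :
    ∃ S T : Finset R, S ≠ T ∧ #S = d ∧ #T = d ∧
      (∀ z ∈ S, z ^ n = 1) ∧ (∀ z ∈ T, z ^ n = 1) ∧ ∑ z ∈ S, z = ∑ z ∈ T, z := by
  obtain ⟨m, rfl⟩ := hdn
  have hω : IsPrimitiveRoot (ζ ^ m) d := hζ.pow (by lia) (mul_comm d m)
  have hζ₀ : ζ ≠ 0 := hζ.ne_zero (by lia)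
  have mem_coset {α z : R} : z ∈ nthRootsFinset d (α ^ d) ↔ z ^ d = α ^ d :=
    mem_nthRootsFinset (by lia) _
  have pow_eq_one {α : R} (hα : α ^ (d * m) = 1) : ∀ z ∈ nthRootsFinset d (α ^ d),
      z ^ (d * m) = 1 := fun z hz ↦ by rw [pow_mul, mem_coset.mp hz, ← pow_mul, hα]
  refine ⟨nthRootsFinset d (1 ^ d), nthRootsFinset d (ζ ^ d), fun heq ↦ ?_,
    card_nthRootsFinset_pow hω one_ne_zero, card_nthRootsFinset_pow hω hζ₀,
    pow_eq_one (one_pow _), pow_eq_one hζ.pow_eq_one, ?_⟩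
  · have hζd : ζ ^ d = 1 ^ d := mem_coset.mp (heq ▸ mem_coset.mpr rfl)
    exact hζ.pow_ne_one_of_pos_of_lt (by lia) hlt (hζd.trans (one_pow d))
  · rw [sum_nthRootsFinset_pow_eq_zero hω hd one_ne_zero,
      sum_nthRootsFinset_pow_eq_zero hω hd hζ₀]

theorem min_coalescence_is_min_prime_factor_general [CharZero R] {ζ : R}
    (hζ : IsPrimitiveRoot ζ n) (hn : n.minFac < n) :
    (∃ S T : Finset R, S ≠ T ∧ #S = n.minFac ∧ #T = n.minFac ∧
      (∀ z ∈ S, z ^ n = 1) ∧ (∀ z ∈ T, z ^ n = 1) ∧ ∑ z ∈ S, z = ∑ z ∈ T, z) ∧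
    (∀ s t : Multiset R, s.card < n.minFac → t.card < n.minFac →
      (∀ z ∈ s, z ^ n = 1) → (∀ z ∈ t, z ^ n = 1) → s.sum = t.sum → s = t) := by
  have : NeZero n := ⟨by lia⟩
  have hprime : n.minFac.Prime := Nat.minFac_prime fun h ↦ by simp [h] at hn
  exact ⟨exists_ne_and_sum_eq_of_dvd hζ hprime.one_lt n.minFac_dvd hn,
    fun s t hsn htn hs ht ↦ multiset_eq_of_sum_eq_of_card_lt_minFac hs ht hsn htn⟩

end RootsOfUnity

theorem min_coalescence_is_min_prime_factor (n : ℕ) (hn : 2 ≤ n)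
    (hp : n.minFac ≤ n - 2) :
    (∃ S T : Finset ℂ, S ≠ T ∧ S.card = n.minFac ∧ T.card = n.minFac ∧
      (∀ z ∈ S, z ^ n = 1) ∧ (∀ z ∈ T, z ^ n = 1) ∧ ∑ z ∈ S, z = ∑ z ∈ T, z) ∧
    (∀ k : ℕ, 1 ≤ k → k < n.minFac →
      ¬ ∃ S T : Finset ℂ, S ≠ T ∧ S.card = k ∧ T.card = k ∧
        (∀ z ∈ S, z ^ n = 1) ∧ (∀ z ∈ T, z ^ n = 1) ∧ ∑ z ∈ S, z = ∑ z ∈ T, z) := by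
  refine (min_coalescence_is_min_prime_factor_general
    (Complex.isPrimitiveRoot_exp n (by lia)) (by lia)).imp_right fun huniq k _ hk ↦ ?_
  rintro ⟨S, T, hne, rfl, hcard, hS, hT, hsum⟩
  exact hne (val_injective (huniq S.val T.val hk (hcard.trans_lt hk) hS hT (by simpa using hsum)))
end

section
/- With ñ_k defined by ñ_k = k−1 if k is prime and ñ_k = 2(P₁(k)−1) if k is composite, the partial sums satisfy Σ_{k=2}^{n} ñ_k ∼ n²/(2 log n) as n → ∞; consequently (2/(n²−n)) Σ_{k=2}^{n} ñ_k → 0, i.e., non-coalescing Grassmannians have density zero. -/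
open Filter

/-- Number of non-coalescing Grassmannians of proper subspaces of `ℂ^k`, for `k ≥ 2`. -/
def tn (k : ℕ) : ℕ := if k.Prime then k - 1 else 2 * (k.minFac - 1)

/-!
A composite `k` has a prime factor at most `√k`, so composites contribute only `O(n√n)` and the
sum is governed by the primes up to `n`.

The prime number theorem comes from the Wiener–Ikehara theorem. The function
`f t = e⁻ᵗ ∑_{k ≤ eᵗ} Λ(k) - 1` is bounded, and its Laplace transform extends continuously to
`Re s ≥ 0` because `ζ` has no zeros on `Re s = 1`. For `w` continuous with compact support, the
averages `∫ 𝓕w(t - u) f(t) dt` are thus Fourier integrals of compactly supported continuous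
functions, which vanish as `u → ∞` by Riemann–Lebesgue. Taking `𝓕w = ‖𝓕φ‖²`, rescaled, as a
nonnegative approximate identity and using that `f` cannot drop quickly gives `f → 0`.

Partial summation then yields `∑_{p ≤ n} p log p ∼ n²/2`, and the weight `log p` may be replaced
by `log n` since `0 ≤ p log (n / p) ≤ n` and `π(n) = o(n)`.
-/

section LaplaceFourier

open Set MeasureTheory Topology
open scoped FourierTransform

/-- The one-sided Laplace transform `s ↦ ∫₀^∞ e^{-st} f(t) dt`; the values of `f` on `(-∞, 0]`
are irrelevant. -/
noncomputable def laplaceTransform (f : ℝ → ℂ) (s : ℂ) : ℂ :=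
  ∫ t in Ioi (0 : ℝ), Complex.exp (-s * t) * f t

variable {f w : ℝ → ℂ} {Φ : ℂ → ℂ} {M : ℝ}

lemma norm_cexp_neg_mul_le_one {s : ℂ} (hs : 0 ≤ s.re) {t : ℝ} (ht : 0 ≤ t) :
    ‖Complex.exp (-s * t)‖ ≤ 1 := by
  rw [Complex.norm_exp, Real.exp_le_one_iff]
  simpa using mul_nonneg hs ht

lemma continuousOn_laplaceTransform (hf : IntegrableOn f (Ioi 0)) :
    ContinuousOn (laplaceTransform f) {s | 0 ≤ s.re} := by
  refine continuousOn_of_dominated (bound := fun t ↦ ‖f t‖) (fun s _ ↦ ?_) (fun s hs ↦ ?_)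
    hf.norm (.of_forall fun t ↦ by fun_prop)
  · exact (Continuous.aestronglyMeasurable (by fun_prop)).mul hf.aestronglyMeasurable
  · filter_upwards [ae_restrict_mem measurableSet_Ioi] with t ht
    rw [norm_mul]
    exact mul_le_of_le_one_left (norm_nonneg _) (norm_cexp_neg_mul_le_one hs (le_of_lt ht))

lemma integrableOn_cexp_neg_mul_of_bounded (hf : AEStronglyMeasurable f (volume.restrict (Ioi 0)))
    (hM : ∀ t > 0, ‖f t‖ ≤ M) {s : ℂ} (hs : 0 < s.re) :
    IntegrableOn (fun t : ℝ ↦ Complex.exp (-s * t) * f t) (Ioi 0) :=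
  (integrableOn_exp_mul_complex_Ioi (by simpa using hs) 0).mul_bdd (c := M) hf
    ((ae_restrict_mem measurableSet_Ioi).mono hM)

lemma fourier_fourierChar_mul (w : ℝ → ℂ) (u t : ℝ) :
    𝓕 (fun y ↦ 𝐞 (u * y) * w y) t = 𝓕 w (t - u) := by
  have hphase (y : ℝ) : -(y * t) + u * y = -(y * (t - u)) := by ring
  simp only [Real.fourier_real_eq, Circle.smul_def, smul_eq_mul, ← mul_assoc,
    ← Circle.coe_mul, ← AddChar.map_add_eq_mul, hphase]

-- Self-adjointness of the Fourier transform, as a Laplace transform on a vertical line is a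
-- Fourier transform.
lemma integral_mul_laplaceTransform_eq
    (hf : AEStronglyMeasurable f (volume.restrict (Ioi 0))) (hM : ∀ t > 0, ‖f t‖ ≤ M)
    (hw : Integrable w) (u : ℝ) {σ : ℝ} (hσ : 0 < σ) :
    ∫ y : ℝ, 𝐞 (u * y) * w y * laplaceTransform f (σ + 2 * Real.pi * y * Complex.I) =
      laplaceTransform (fun t ↦ 𝓕 w (t - u) * f t) σ := by
  have hw' : Integrable fun y : ℝ ↦ (𝐞 (u * y) : ℂ) * w y :=
    hw.bdd_mul (c := 1) (Continuous.aestronglyMeasurable (by fun_prop))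
      (.of_forall fun y ↦ (Circle.norm_coe _).le)
  have hadj := VectorFourier.integral_fourierIntegral_smul_eq_flip (L := innerₗ ℝ)
    Real.continuous_fourierChar continuous_inner hw'
    (integrableOn_cexp_neg_mul_of_bounded hf hM (s := σ) (by simpa using hσ))
  have hline (y : ℝ) : VectorFourier.fourierIntegral 𝐞 (volume.restrict (Ioi 0)) (innerₗ ℝ).flip
      (fun t : ℝ ↦ Complex.exp (-σ * t) * f t) y =
      laplaceTransform f (σ + 2 * Real.pi * y * Complex.I) := by
    refine integral_congr_ae (.of_forall fun t ↦ ?_)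
    simp only [LinearMap.flip_apply, innerₗ_apply_apply, Real.inner_apply, Circle.smul_def,
      smul_eq_mul, Real.fourierChar_apply, ← mul_assoc, ← Complex.exp_add]
    push_cast
    ring_nf
  have hshift (t : ℝ) : VectorFourier.fourierIntegral 𝐞 volume (innerₗ ℝ)
      (fun y ↦ (𝐞 (u * y) : ℂ) * w y) t = 𝓕 w (t - u) := fourier_fourierChar_mul w u t
  simp only [hline, hshift, smul_eq_mul] at hadj
  rw [← hadj, laplaceTransform]
  simp only [mul_left_comm]

lemma continuousOn_integral_mul_vertical_line (hΦ : ContinuousOn Φ {s | 0 ≤ s.re})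
    (hw : Continuous w) (hws : HasCompactSupport w) :
    ContinuousOn (fun σ : ℝ ↦ ∫ y : ℝ, w y * Φ (σ + 2 * Real.pi * y * Complex.I)) (Ici 0) := by
  refine continuousOn_integral_of_compact_support hws ?_ fun σ y _ hy ↦ by
    simp [image_eq_zero_of_notMem_tsupport hy]
  refine ContinuousOn.mul (by fun_prop) (hΦ.comp (by fun_prop) fun z hz ↦ ?_)
  simpa using hz.1

theorem tendsto_integral_fourier_sub_mul_of_laplaceTransform
    (hf : AEStronglyMeasurable f (volume.restrict (Ioi 0))) (hM : ∀ t > 0, ‖f t‖ ≤ M)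
    (hΦ : ContinuousOn Φ {s | 0 ≤ s.re}) (hfΦ : EqOn (laplaceTransform f) Φ {s | 0 < s.re})
    (hw : Continuous w) (hws : HasCompactSupport w) (hFw : Integrable (𝓕 w)) :
    Tendsto (fun u ↦ ∫ t in Ioi 0, 𝓕 w (t - u) * f t) (cocompact ℝ) (𝓝 0) := by
  have hboundary (u : ℝ) : ∫ y : ℝ, 𝐞 (u * y) * w y * Φ (2 * Real.pi * y * Complex.I) =
      ∫ t in Ioi 0, 𝓕 w (t - u) * f t := by
    have hint : IntegrableOn (fun t ↦ 𝓕 w (t - u) * f t) (Ioi 0) :=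
      (hFw.comp_sub_right u).integrableOn.mul_bdd (c := M) hf
        ((ae_restrict_mem measurableSet_Ioi).mono hM)
    have hopen : EqOn
        (fun σ : ℝ ↦ ∫ y : ℝ, 𝐞 (u * y) * w y * Φ (σ + 2 * Real.pi * y * Complex.I))
        (fun σ : ℝ ↦ laplaceTransform (fun t ↦ 𝓕 w (t - u) * f t) σ) (Ioi 0) := fun σ hσ ↦ by
      have hre (y : ℝ) : 0 < (σ + 2 * Real.pi * y * Complex.I : ℂ).re := by simpa using hσ
      simp only [← integral_mul_laplaceTransform_eq hf hM
        (hw.integrable_of_hasCompactSupport hws) u hσ, hfΦ (hre _)]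
    have hclosed := hopen.of_subset_closure
      (continuousOn_integral_mul_vertical_line hΦ (by fun_prop) hws.mul_left)
      ((continuousOn_laplaceTransform hint).comp (by fun_prop) fun σ hσ ↦ by simpa using hσ)
      Ioi_subset_Ici_self (closure_Ioi 0).ge
    simpa [laplaceTransform] using hclosed self_mem_Ici
  have hRL := (Real.tendsto_integral_exp_smul_cocompact fun y ↦
    w y * Φ (2 * Real.pi * y * Complex.I)).comp
    (Homeomorph.neg ℝ).isClosedEmbedding.tendsto_cocompact
  refine hRL.congr fun u ↦ ?_
  simp [← hboundary, Circle.smul_def, mul_assoc, mul_comm u]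

end LaplaceFourier

section PositiveKernel

open MeasureTheory Topology ContinuousLinearMap
open scoped FourierTransform ComplexConjugate Convolution

lemma fourier_conj_comp_neg (φ : ℝ → ℂ) (t : ℝ) :
    𝓕 (fun x ↦ conj (φ (-x))) t = conj (𝓕 φ t) := by
  rw [Real.fourier_real_eq, Real.fourier_real_eq, ← integral_conj, ← integral_neg_eq_self]
  simp [Circle.smul_def, ← Circle.coe_inv_eq_conj, ← AddChar.map_neg_eq_inv]

lemma fourier_convolution_conj_comp_neg {φ : ℝ → ℂ} (hφ : Integrable φ) (t : ℝ) :
    𝓕 (φ ⋆[mul ℂ ℂ] fun x ↦ conj (φ (-x))) t = (‖𝓕 φ t‖ ^ 2 : ℝ) := by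
  have hφ' : Integrable fun x ↦ conj (φ (-x)) :=
    (LinearIsometryEquiv.integrable_comp_iff Complex.conjLIE).mpr hφ.comp_neg
  rw [Real.fourier_mul_convolution_eq hφ hφ', fourier_conj_comp_neg, Complex.mul_conj,
    Complex.normSq_eq_norm_sq]

lemma exists_hasCompactSupport_integral_norm_sq_eq_one :
    ∃ φ : SchwartzMap ℝ ℂ, HasCompactSupport φ ∧ ∫ t, ‖φ t‖ ^ 2 = 1 := by
  let b : ContDiffBump (0 : ℝ) := default
  have hbs : HasCompactSupport fun x ↦ (b x : ℂ) :=
    b.hasCompactSupport.comp_left Complex.ofReal_zero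
  let ψ : SchwartzMap ℝ ℂ := hbs.toSchwartzMap (Complex.ofRealCLM.contDiff.comp b.contDiff)
  have hψ0 : ψ 0 ≠ 0 := Complex.ofReal_ne_zero.mpr (b.pos_of_mem_ball (by simp [b.rOut_pos])).ne'
  have hc : 0 < ∫ t, ‖ψ t‖ ^ 2 :=
    Continuous.integral_pos_of_hasCompactSupport_nonneg_nonzero (x := 0) (by fun_prop)
      (hbs.comp_left (g := fun z : ℂ ↦ ‖z‖ ^ 2) (by simp)) (fun t ↦ sq_nonneg _)
      (pow_ne_zero 2 (norm_ne_zero_iff.mpr hψ0))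
  set c := ∫ t, ‖ψ t‖ ^ 2
  refine ⟨((√c)⁻¹ : ℂ) • ψ, hbs.smul_left, ?_⟩
  have hsq (t : ℝ) : ‖(((√c)⁻¹ : ℂ) • ψ) t‖ ^ 2 = c⁻¹ * ‖ψ t‖ ^ 2 := by
    simp [mul_pow, hc.le]
  simp only [hsq]
  rw [integral_const_mul, inv_mul_cancel₀ hc.ne']

lemma exists_fourier_eq_kernel :
    ∃ (w : ℝ → ℂ) (K : ℝ → ℝ), Continuous w ∧ HasCompactSupport w ∧
      (∀ t, 𝓕 w t = K t) ∧ (∀ t, 0 ≤ K t) ∧ ∫ t, K t = 1 := by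
  obtain ⟨φ, hφs, hφ1⟩ := exists_hasCompactSupport_integral_norm_sq_eq_one
  have hφs' : HasCompactSupport fun x ↦ conj (φ (-x)) :=
    (hφs.comp_homeomorph (Homeomorph.neg ℝ)).comp_left (map_zero _)
  refine ⟨φ ⋆[mul ℂ ℂ] fun x ↦ conj (φ (-x)), fun t ↦ ‖𝓕 φ t‖ ^ 2,
    hφs'.continuous_convolution_right _ φ.continuous.locallyIntegrable (by fun_prop),
    hφs.convolution _ hφs', fourier_convolution_conj_comp_neg φ.integrable,
    fun t ↦ sq_nonneg _, ?_⟩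
  rw [SchwartzMap.integral_norm_sq_fourier, hφ1]

lemma fourier_comp_div (w : ℝ → ℂ) {r : ℝ} (hr : 0 < r) (t : ℝ) :
    𝓕 (fun y ↦ w (y / r)) t = r * 𝓕 w (r * t) := by
  rw [Real.fourier_real_eq, Real.fourier_real_eq]
  have := Measure.integral_comp_div (fun y : ℝ ↦ 𝐞 (-(y * (r * t))) • w y) r
  rw [abs_of_pos hr, Complex.real_smul] at this
  rw [← this]
  congr! 3 with y
  field_simp

lemma exists_fourier_eq_concentrated_kernel {δ a : ℝ} (hδ : 0 < δ) (ha : a < 1) :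
    ∃ (w : ℝ → ℂ) (K : ℝ → ℝ), Continuous w ∧ HasCompactSupport w ∧
      (∀ t, 𝓕 w t = K t) ∧ (∀ t, 0 ≤ K t) ∧ ∫ t, K t = 1 ∧ a < ∫ t in -δ..δ, K t := by
  obtain ⟨w, K, hw, hws, hwK, hK0, hK1⟩ := exists_fourier_eq_kernel
  have hmass : Tendsto (fun r : ℝ ↦ ∫ t in -(r * δ)..r * δ, K t) atTop (𝓝 1) := by
    rw [← hK1]
    exact intervalIntegral_tendsto_integral (integrable_of_integral_eq_one hK1)
      (tendsto_neg_atTop_atBot.comp (tendsto_id.atTop_mul_const hδ))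
      (tendsto_id.atTop_mul_const hδ)
  obtain ⟨r, har, hr⟩ := ((hmass.eventually_const_lt ha).and (eventually_gt_atTop 0)).exists
  refine ⟨fun y ↦ w (y / r), fun t ↦ r * K (r * t), by fun_prop, ?_, fun t ↦ ?_,
    fun t ↦ mul_nonneg hr.le (hK0 _), ?_, ?_⟩
  · simpa [div_eq_inv_mul] using hws.comp_smul (inv_ne_zero hr.ne')
  · simp [fourier_comp_div w hr, hwK]
  · rw [integral_const_mul, Measure.integral_comp_mul_left, hK1, abs_of_pos (inv_pos.mpr hr)]
    simp [hr.ne']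
  · rwa [intervalIntegral.integral_const_mul, intervalIntegral.mul_integral_comp_mul_left,
      mul_neg]

end PositiveKernel

section Tauberian

open Set MeasureTheory Topology
open scoped FourierTransform

/-- Slow decrease in the sense of Schmidt, in the additive variable: far out, `f` cannot drop by
more than a prescribed amount over sufficiently short intervals. -/
def SlowlyDecreasing (f : ℝ → ℝ) : Prop :=
  ∀ ε > 0, ∃ δ > 0, ∀ᶠ s in atTop, ∀ t ∈ Icc s (s + δ), f s - ε ≤ f t

variable {f : ℝ → ℝ} {M : ℝ} {Φ : ℂ → ℂ}

lemma SlowlyDecreasing.sub_const (hf : SlowlyDecreasing f) (A : ℝ) :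
    SlowlyDecreasing fun t ↦ f t - A := fun ε hε ↦ by
  obtain ⟨δ, hδ, h⟩ := hf ε hε
  refine ⟨δ, hδ, h.mono fun s hs t ht ↦ ?_⟩
  linarith [hs t ht]

lemma le_integral_kernel_sub_mul {K : ℝ → ℝ} {ε δ u : ℝ} (hK0 : ∀ t, 0 ≤ K t)
    (hK1 : ∫ t, K t = 1) (hf : AEStronglyMeasurable f (volume.restrict (Ioi 0)))
    (hM : ∀ t > 0, |f t| ≤ M) (hδ : 0 ≤ δ) (hu : δ ≤ u) (hε : ∀ t ∈ Ioc (u - δ) (u + δ), ε ≤ f t) :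
    (ε + M) * (∫ t in -δ..δ, K t) - M ≤ ∫ t in Ioi 0, K (t - u) * f t := by
  have hM0 : 0 ≤ M := (abs_nonneg _).trans (hM 1 one_pos)
  have hKu : Integrable fun t ↦ K (t - u) := (integrable_of_integral_eq_one hK1).comp_sub_right u
  have hsub : Ioc (u - δ) (u + δ) ⊆ Ioi 0 := fun t ht ↦ by
    have := ht.1
    simp only [mem_Ioi]
    linarith
  have hmass : ∫ t in Ioi 0, K (t - u) ≤ 1 := by
    rw [← hK1, ← integral_sub_right_eq_self K u]
    exact setIntegral_le_integral hKu (.of_forall fun t ↦ hK0 _)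
  have hwindow : ∫ t in Ioi 0, (Ioc (u - δ) (u + δ)).indicator (fun t ↦ K (t - u)) t =
      ∫ t in -δ..δ, K t := by
    rw [setIntegral_indicator measurableSet_Ioc, inter_eq_self_of_subset_right hsub,
      ← intervalIntegral.integral_of_le (by linarith), intervalIntegral.integral_comp_sub_right]
    ring_nf
  have hind : IntegrableOn (fun t ↦ (ε + M) * (Ioc (u - δ) (u + δ)).indicator
      (fun t ↦ K (t - u)) t) (Ioi 0) :=
    ((hKu.indicator measurableSet_Ioc).const_mul _).integrableOn
  have hKM : IntegrableOn (fun t ↦ M * K (t - u)) (Ioi 0) := (hKu.const_mul M).integrableOn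
  calc (ε + M) * (∫ t in -δ..δ, K t) - M
      ≤ (ε + M) * (∫ t in -δ..δ, K t) - M * ∫ t in Ioi 0, K (t - u) := by nlinarith
    _ = ∫ t in Ioi 0, ((ε + M) * (Ioc (u - δ) (u + δ)).indicator (fun t ↦ K (t - u)) t -
          M * K (t - u)) := by
        rw [integral_sub hind hKM, integral_const_mul, integral_const_mul, hwindow]
    _ ≤ ∫ t in Ioi 0, K (t - u) * f t := by
        refine setIntegral_mono_on (hind.sub hKM) (hKu.integrableOn.mul_bdd (c := M) hf
          ((ae_restrict_mem measurableSet_Ioi).mono hM)) measurableSet_Ioi fun t ht ↦ ?_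
        by_cases hwin : t ∈ Ioc (u - δ) (u + δ)
        · rw [indicator_of_mem hwin]
          linarith [mul_le_mul_of_nonneg_left (hε t hwin) (hK0 (t - u))]
        · rw [indicator_of_notMem hwin]
          linarith [mul_le_mul_of_nonneg_left (neg_le_of_abs_le (hM t ht)) (hK0 (t - u))]

lemma eventually_exists_mem_Ioc_lt (hf : AEStronglyMeasurable f (volume.restrict (Ioi 0)))
    (hM : ∀ t > 0, |f t| ≤ M) (hΦ : ContinuousOn Φ {s | 0 ≤ s.re})
    (hfΦ : EqOn (laplaceTransform fun t ↦ f t) Φ {s | 0 < s.re})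
    {ε δ : ℝ} (hε : 0 < ε) (hδ : 0 < δ) :
    ∀ᶠ u in atTop, ∃ t ∈ Ioc (u - δ) (u + δ), f t < ε := by
  have hM0 : 0 ≤ M := (abs_nonneg _).trans (hM 1 one_pos)
  have ha : (ε / 2 + M) / (ε + M) < 1 := (div_lt_one (by positivity)).mpr (by linarith)
  obtain ⟨w, K, hw, hws, hwK, hK0, hK1, hK⟩ := exists_fourier_eq_concentrated_kernel hδ ha
  rw [div_lt_iff₀' (by positivity)] at hK
  have hlim : Tendsto (fun u ↦ ∫ t in Ioi 0, K (t - u) * f t) atTop (𝓝 0) := by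
    have hFw : Integrable (𝓕 w) := by
      rw [funext hwK]
      exact (integrable_of_integral_eq_one hK1).ofReal
    have h := tendsto_integral_fourier_sub_mul_of_laplaceTransform
      (Complex.continuous_ofReal.comp_aestronglyMeasurable hf) (by simpa using hM) hΦ hfΦ
      hw hws hFw
    simp only [hwK, ← Complex.ofReal_mul, integral_complex_ofReal] at h
    exact tendsto_ofReal_iff.mp (by exact_mod_cast h.mono_left atTop_le_cocompact)
  filter_upwards [hlim.eventually_lt_const (half_pos hε), eventually_ge_atTop δ] with u hu hδu
  by_contra! hge
  linarith [le_integral_kernel_sub_mul hK0 hK1 hf hM hδ.le hδu hge]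

theorem SlowlyDecreasing.tendsto_zero (hsd : SlowlyDecreasing f)
    (hf : AEStronglyMeasurable f (volume.restrict (Ioi 0)))
    (hM : ∀ t > 0, |f t| ≤ M) (hΦ : ContinuousOn Φ {s | 0 ≤ s.re})
    (hfΦ : EqOn (laplaceTransform fun t ↦ f t) Φ {s | 0 < s.re}) :
    Tendsto f atTop (𝓝 0) := by
  refine Metric.tendsto_nhds.mpr fun ε hε ↦ ?_
  obtain ⟨δ, hδ, hdrop⟩ := hsd (ε / 2) (half_pos hε)
  have hsmall := eventually_exists_mem_Ioc_lt hf hM hΦ hfΦ (half_pos hε) (half_pos hδ)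
  have hlarge := eventually_exists_mem_Ioc_lt (f := fun t ↦ -f t) (Φ := fun s ↦ -Φ s) hf.neg
    (by simpa using hM) hΦ.neg (fun s hs ↦ by simp [← hfΦ hs, laplaceTransform, integral_neg])
    (half_pos hε) (half_pos hδ)
  have hshift (c : ℝ) : Tendsto (fun u : ℝ ↦ u + c) atTop atTop :=
    tendsto_atTop_add_const_right _ c tendsto_id
  filter_upwards [hdrop, (hshift (-δ)).eventually (eventually_forall_ge_atTop.mpr hdrop),
    (hshift (δ / 2)).eventually hsmall, (hshift (-(δ / 2))).eventually hlarge]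
    with u hu hu' ⟨t, ht, hft⟩ ⟨s, hs, hfs⟩
  have hut := hu t ⟨by linarith [ht.1], by linarith [ht.2]⟩
  have hsu := hu' s (by linarith [hs.1]) u ⟨by linarith [hs.2], by linarith [hs.1]⟩
  rw [Real.dist_0_eq_abs, abs_lt]
  constructor <;> linarith

end Tauberian

section WienerIkehara

open Set MeasureTheory Topology Real

/-- The summatory function `∑_{1 ≤ k ≤ x} a k` of a sequence; the term `a 0` is ignored. -/
noncomputable def summatory (a : ℕ → ℝ) (x : ℝ) : ℝ := ∑ k ∈ Finset.Icc 1 ⌊x⌋₊, a k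

variable {a : ℕ → ℝ} {A C : ℝ} {G : ℂ → ℂ}

lemma summatory_nonneg (ha : ∀ k, 0 ≤ a k) (x : ℝ) : 0 ≤ summatory a x :=
  Finset.sum_nonneg fun k _ ↦ ha k

lemma summatory_mono (ha : ∀ k, 0 ≤ a k) : Monotone (summatory a) := fun _ _ hxy ↦
  Finset.sum_le_sum_of_subset_of_nonneg (Finset.Icc_subset_Icc_right (Nat.floor_mono hxy))
    fun k _ _ ↦ ha k

lemma summatory_le (ha : ∀ k, 0 ≤ a k) (haC : ∀ n : ℕ, ∑ k ∈ Finset.Icc 1 n, a k ≤ C * n)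
    {x : ℝ} (hx : 0 ≤ x) : summatory a x ≤ C * x := by
  have hC : 0 ≤ C := (ha 1).trans (by simpa using haC 1)
  exact (haC _).trans (mul_le_mul_of_nonneg_left (Nat.floor_le hx) hC)

lemma measurable_summatory_exp_mul_exp_neg (ha : ∀ k, 0 ≤ a k) :
    Measurable fun t ↦ summatory a (exp t) * exp (-t) :=
  ((summatory_mono ha).measurable.comp measurable_exp).mul (by fun_prop)

lemma abs_summatory_exp_mul_exp_neg_le (ha : ∀ k, 0 ≤ a k)
    (haC : ∀ n : ℕ, ∑ k ∈ Finset.Icc 1 n, a k ≤ C * n) (t : ℝ) :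
    |summatory a (exp t) * exp (-t)| ≤ C := by
  rw [abs_of_nonneg (mul_nonneg (summatory_nonneg ha _) (exp_pos _).le), exp_neg,
    ← div_eq_mul_inv, div_le_iff₀ (exp_pos t)]
  exact summatory_le ha haC (exp_pos t).le

lemma slowlyDecreasing_comp_exp_mul_exp_neg {S : ℝ → ℝ} (hS : Monotone S) (hS0 : ∀ x, 0 ≤ S x)
    (hSC : ∀ x > 0, S x ≤ C * x) : SlowlyDecreasing fun t ↦ S (exp t) * exp (-t) := by
  intro ε hε
  have hC : 0 ≤ C := by simpa using (hS0 1).trans (hSC 1 one_pos)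
  refine ⟨ε / (C + 1), by positivity, .of_forall fun s t ⟨hst, hts⟩ ↦ ?_⟩
  have hfs : S (exp s) * exp (-s) ≤ C := by
    rw [exp_neg, ← div_eq_mul_inv, div_le_iff₀ (exp_pos s)]
    exact hSC _ (exp_pos s)
  have hdrop : C * (t - s) ≤ ε := by
    rw [← sub_le_iff_le_add', le_div_iff₀ (by positivity)] at hts
    nlinarith
  calc S (exp s) * exp (-s) - ε
      ≤ S (exp s) * exp (-s) - S (exp s) * exp (-s) * (t - s) := by
        gcongr
        exact (mul_le_mul_of_nonneg_right hfs (sub_nonneg.mpr hst)).trans hdrop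
    _ = S (exp s) * exp (-s) * (-(t - s) + 1) := by ring
    _ ≤ S (exp s) * exp (-s) * exp (-(t - s)) := by
        gcongr
        · exact mul_nonneg (hS0 _) (exp_pos _).le
        · exact add_one_le_exp _
    _ = S (exp s) * exp (-t) := by rw [mul_assoc, ← exp_add]; ring_nf
    _ ≤ S (exp t) * exp (-t) := by gcongr; exact hS (exp_le_exp.mpr hst)

lemma LSeries_add_one_eq_mul_laplaceTransform (ha : ∀ k, 0 ≤ a k)
    (haC : ∀ n : ℕ, ∑ k ∈ Finset.Icc 1 n, a k ≤ C * n) {s : ℂ} (hs : 0 < s.re) :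
    LSeries (fun k ↦ a k) (s + 1) =
      (s + 1) * laplaceTransform (fun t ↦ (summatory a (exp t) * exp (-t) : ℝ)) s := by
  have hO : (fun n : ℕ ↦ ∑ k ∈ Finset.Icc 1 n, a k) =O[atTop] fun n ↦ (n : ℝ) ^ (1 : ℝ) := by
    refine .of_bound C (.of_forall fun n ↦ ?_)
    rw [norm_of_nonneg (Finset.sum_nonneg fun k _ ↦ ha k), rpow_one,
      norm_of_nonneg n.cast_nonneg]
    exact haC n
  rw [LSeries_eq_mul_integral_of_nonneg a zero_le_one (by simpa using hs) hO ha, ← exp_zero,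
    ← integral_comp_exp_Ioi, laplaceTransform]
  congr 1
  refine setIntegral_congr_fun measurableSet_Ioi fun t _ ↦ ?_
  rw [summatory, Complex.real_smul, Complex.cpow_def_of_ne_zero (by simp [Complex.exp_ne_zero]),
    ← Complex.ofReal_log (exp_pos t).le, log_exp, mul_left_comm]
  push_cast
  rw [mul_left_comm (Complex.exp _), ← Complex.exp_add, ← Complex.exp_add]
  ring_nf

lemma add_one_ne_zero_of_re_nonneg {s : ℂ} (hs : 0 ≤ s.re) : s + 1 ≠ 0 := by
  intro h
  have := congrArg Complex.re h
  simp only [Complex.add_re, Complex.one_re, Complex.zero_re] at this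
  linarith

lemma laplaceTransform_summatory_sub_const (ha : ∀ k, 0 ≤ a k)
    (haC : ∀ n : ℕ, ∑ k ∈ Finset.Icc 1 n, a k ≤ C * n) {s : ℂ} (hs : 0 < s.re) :
    laplaceTransform (fun t ↦ (summatory a (exp t) * exp (-t) - A : ℝ)) s =
      (LSeries (fun k ↦ a k) (s + 1) - A / s - A) / (s + 1) := by
  have hs0 : s ≠ 0 := by rintro rfl; simp at hs
  have hs1 : s + 1 ≠ 0 := add_one_ne_zero_of_re_nonneg hs.le
  have hint : IntegrableOn (fun t : ℝ ↦ Complex.exp (-s * t) *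
      (summatory a (exp t) * exp (-t) : ℝ)) (Ioi 0) :=
    integrableOn_cexp_neg_mul_of_bounded
      (measurable_summatory_exp_mul_exp_neg ha).complex_ofReal.aestronglyMeasurable
      (fun t _ ↦ (Complex.norm_real _).trans_le (abs_summatory_exp_mul_exp_neg_le ha haC t)) hs
  have hexp : IntegrableOn (fun t : ℝ ↦ Complex.exp (-s * t)) (Ioi 0) :=
    integrableOn_exp_mul_complex_Ioi (by simpa using hs) 0
  have hone : ∫ t in Ioi (0 : ℝ), Complex.exp (-s * t) = 1 / s := by
    rw [integral_exp_mul_complex_Ioi (by simpa using hs)]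
    simp
  rw [LSeries_add_one_eq_mul_laplaceTransform ha haC hs]
  simp only [laplaceTransform, Complex.ofReal_sub, mul_sub]
  rw [integral_sub hint (hexp.mul_const _), integral_mul_const, hone]
  field

theorem tendsto_summatory_div_of_LSeries (ha : ∀ k, 0 ≤ a k)
    (haC : ∀ n : ℕ, ∑ k ∈ Finset.Icc 1 n, a k ≤ C * n) (hG : ContinuousOn G {s | 1 ≤ s.re})
    (hGa : EqOn G (fun s ↦ LSeries (fun k ↦ a k) s - A / (s - 1)) {s | 1 < s.re}) :
    Tendsto (fun x ↦ summatory a x / x) atTop (𝓝 A) := by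
  have hΦ : ContinuousOn (fun s ↦ (G (s + 1) - A) / (s + 1)) {s | 0 ≤ s.re} :=
    ((hG.comp (by fun_prop) fun s hs ↦ by simpa using hs).sub continuousOn_const).div
      (by fun_prop) fun s hs ↦ add_one_ne_zero_of_re_nonneg hs
  have hlim := ((slowlyDecreasing_comp_exp_mul_exp_neg (summatory_mono ha) (summatory_nonneg ha)
    fun x hx ↦ summatory_le ha haC hx.le).sub_const A).tendsto_zero
    ((measurable_summatory_exp_mul_exp_neg ha).sub_const A).aestronglyMeasurable
    (M := C + |A|) (fun t _ ↦ (abs_sub _ _).trans <| by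
      gcongr; exact abs_summatory_exp_mul_exp_neg_le ha haC t) hΦ fun s hs ↦ by
        rw [laplaceTransform_summatory_sub_const ha haC hs, hGa (by simpa using hs)]
        simp only [add_sub_cancel_right]
  have hlog := (hlim.comp tendsto_log_atTop).add_const A
  rw [zero_add] at hlog
  refine hlog.congr' ?_
  filter_upwards [eventually_gt_atTop 0] with x hx
  rw [Function.comp_apply, exp_neg, exp_log hx]
  ring

end WienerIkehara

section PrimeNumberTheorem

open Topology Real Chebyshev
open ArithmeticFunction (vonMangoldt)
open scoped ArithmeticFunction.vonMangoldt

lemma sum_Icc_one_vonMangoldt (n : ℕ) : ∑ k ∈ Finset.Icc 1 n, Λ k = ψ n := by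
  rw [psi, Nat.floor_natCast, ← Finset.Icc_add_one_left_eq_Ioc, zero_add]

theorem tendsto_summatory_residueClass_div {q : ℕ} [NeZero q] {a : ZMod q} (ha : IsUnit a) :
    Tendsto (fun x ↦ summatory (vonMangoldt.residueClass a) x / x) atTop
      (𝓝 (q.totient : ℝ)⁻¹) := by
  refine tendsto_summatory_div_of_LSeries (C := log 4 + 4) (vonMangoldt.residueClass_nonneg a)
    (fun n ↦ ?_) (vonMangoldt.continuousOn_LFunctionResidueClassAux a) ?_
  · calc ∑ k ∈ Finset.Icc 1 n, vonMangoldt.residueClass a k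
        ≤ ∑ k ∈ Finset.Icc 1 n, Λ k :=
          Finset.sum_le_sum fun k _ ↦ vonMangoldt.residueClass_le a k
      _ = ψ n := sum_Icc_one_vonMangoldt n
      _ ≤ (log 4 + 4) * n := psi_le_const_mul_self n.cast_nonneg
  · simpa using vonMangoldt.eqOn_LFunctionResidueClassAux ha

theorem tendsto_psi_div_self : Tendsto (fun x : ℝ ↦ ψ x / x) atTop (𝓝 1) := by
  have h := tendsto_summatory_residueClass_div (isUnit_one (M := ZMod 1))
  rw [Nat.totient_one, Nat.cast_one, inv_one] at h
  refine h.congr fun x ↦ ?_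
  rw [psi_eq_psi_coe_floor, ← sum_Icc_one_vonMangoldt, summatory]
  congr 1
  refine Finset.sum_congr rfl fun k _ ↦ ?_
  rw [vonMangoldt.residueClass, Set.indicator_of_mem (by exact Subsingleton.elim _ _)]

lemma isLittleO_sqrt_id : sqrt =o[atTop] fun x : ℝ ↦ x := by
  refine (Asymptotics.isLittleO_iff_tendsto fun x hx ↦ by rw [hx, sqrt_zero]).mpr ?_
  simpa only [sqrt_div_self', one_div, Function.comp_def] using
    tendsto_inv_atTop_zero.comp tendsto_sqrt_atTop

theorem tendsto_theta_div_self : Tendsto (fun x : ℝ ↦ θ x / x) atTop (𝓝 1) := by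
  have h := tendsto_psi_div_self.sub
    (isBigO_psi_sub_theta_sqrt.trans_isLittleO isLittleO_sqrt_id).tendsto_div_nhds_zero
  rw [sub_zero] at h
  refine h.congr fun x ↦ ?_
  rw [Pi.sub_apply]
  ring

end PrimeNumberTheorem

section PartialSummation

open Topology Asymptotics

lemma sum_natCast_mul_eq_sub (c : ℕ → ℝ) (n : ℕ) :
    ∑ k ∈ Finset.Icc 1 n, k * c k =
      n * ∑ k ∈ Finset.Icc 1 n, c k - ∑ m ∈ Finset.range n, ∑ k ∈ Finset.Icc 1 m, c k := by
  induction n with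
  | zero => simp
  | succ n ih =>
    rw [Finset.sum_Icc_succ_top n.succ_pos, Finset.sum_Icc_succ_top n.succ_pos,
      Finset.sum_range_succ, ih]
    push_cast
    ring

lemma sum_range_natCast (n : ℕ) : ∑ m ∈ Finset.range n, (m : ℝ) = n * (n - 1) / 2 := by
  rw [← Nat.cast_sum, Finset.sum_range_id, ← Nat.choose_two_right, Nat.cast_choose_two]

lemma tendsto_sum_range_natCast_div_sq :
    Tendsto (fun n : ℕ ↦ (∑ m ∈ Finset.range n, (m : ℝ)) / n ^ 2) atTop (𝓝 (1 / 2)) := by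
  have h := ((tendsto_inv_atTop_nhds_zero_nat (𝕜 := ℝ)).const_sub 1).div_const 2
  rw [sub_zero] at h
  refine h.congr' ?_
  filter_upwards [eventually_ne_atTop 0] with n hn
  rw [sum_range_natCast]
  field

lemma tendsto_sum_range_div_sq {u : ℕ → ℝ} {L : ℝ}
    (hu : Tendsto (fun n ↦ u n / n) atTop (𝓝 L)) :
    Tendsto (fun n : ℕ ↦ (∑ m ∈ Finset.range n, u m) / n ^ 2) atTop (𝓝 (L / 2)) := by
  have herr : (fun n ↦ u n - L * n) =o[atTop] fun n : ℕ ↦ (n : ℝ) := by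
    refine (isLittleO_iff_tendsto' ?_).mpr ?_
    · filter_upwards [eventually_ne_atTop 0] with n hn h
      exact absurd h (by positivity)
    · refine (tendsto_sub_nhds_zero_iff.mpr hu).congr' ?_
      filter_upwards [eventually_ne_atTop 0] with n hn
      field
  have htop : Tendsto (fun n : ℕ ↦ ∑ m ∈ Finset.range n, (m : ℝ)) atTop atTop :=
    not_summable_iff_tendsto_nat_atTop_of_nonneg (fun n ↦ n.cast_nonneg) |>.mp fun h ↦
      not_tendsto_nhds_of_tendsto_atTop tendsto_natCast_atTop_atTop 0 h.tendsto_atTop_zero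
  have hO : (fun n : ℕ ↦ ∑ m ∈ Finset.range n, (m : ℝ)) =O[atTop] fun n ↦ (n : ℝ) ^ 2 :=
    isBigO_of_div_tendsto_nhds (by
      filter_upwards [eventually_ne_atTop 0] with n hn h
      exact absurd h (by positivity)) _ tendsto_sum_range_natCast_div_sq
  have h := ((herr.sum_range (fun n ↦ n.cast_nonneg) htop).trans_isBigO hO).tendsto_div_nhds_zero
  have h' := h.add (tendsto_sum_range_natCast_div_sq.const_mul L)
  rw [zero_add, mul_one_div] at h'
  refine h'.congr fun n ↦ ?_
  rw [Finset.sum_sub_distrib, ← Finset.mul_sum]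
  ring

lemma tendsto_sum_natCast_mul_div_sq {c : ℕ → ℝ} {L : ℝ}
    (hc : Tendsto (fun n : ℕ ↦ (∑ k ∈ Finset.Icc 1 n, c k) / n) atTop (𝓝 L)) :
    Tendsto (fun n : ℕ ↦ (∑ k ∈ Finset.Icc 1 n, k * c k) / (n : ℝ) ^ 2) atTop (𝓝 (L / 2)) := by
  have h := hc.sub (tendsto_sum_range_div_sq hc)
  rw [sub_half] at h
  refine h.congr' ?_
  filter_upwards [eventually_ne_atTop 0] with n hn
  rw [sum_natCast_mul_eq_sub]
  field

end PartialSummation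

section PrimeSums

open Topology Real Chebyshev Asymptotics
open scoped Nat.Prime

lemma tendsto_sum_primesLE_mul_log_div_sq :
    Tendsto (fun n : ℕ ↦ (∑ p ∈ n.primesLE, p * log p) / (n : ℝ) ^ 2) atTop (𝓝 (1 / 2)) := by
  have hθ := tendsto_theta_div_self.comp (tendsto_natCast_atTop_atTop (R := ℝ))
  simp only [Function.comp_def, theta_eq_sum_primesLE_log, Nat.primesLE_eq_filter_Icc_one,
    Finset.sum_filter] at hθ
  simpa only [mul_ite, mul_zero, Nat.primesLE_eq_filter_Icc_one, Finset.sum_filter] using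
    tendsto_sum_natCast_mul_div_sq hθ

lemma sum_primesLE_mul_log_le (n : ℕ) :
    ∑ p ∈ n.primesLE, p * log p ≤ log n * ∑ p ∈ n.primesLE, (p : ℝ) := by
  rw [Finset.mul_sum]
  refine Finset.sum_le_sum fun p hp ↦ ?_
  have := Nat.two_le_of_mem_primesLE hp
  have := Nat.le_of_mem_primesLE hp
  rw [mul_comm]
  gcongr

lemma log_mul_sum_primesLE_le (n : ℕ) :
    log n * ∑ p ∈ n.primesLE, (p : ℝ) ≤ ∑ p ∈ n.primesLE, p * log p + n * π n := by
  have hp (p : ℕ) (hp : p ∈ n.primesLE) : log n * p ≤ p * log p + n := by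
    have hp0 : (0 : ℝ) < p := by exact_mod_cast (Nat.prime_of_mem_primesLE hp).pos
    have hn0 : (0 : ℝ) < n := hp0.trans_le (by exact_mod_cast Nat.le_of_mem_primesLE hp)
    have hlog : p * (log n - log p) ≤ n := by
      rw [← log_div hn0.ne' hp0.ne', mul_comm, ← le_div_iff₀ hp0]
      exact log_le_self (by positivity)
    linarith
  rw [Finset.mul_sum]
  refine (Finset.sum_le_sum hp).trans_eq ?_
  rw [Finset.sum_add_distrib, Finset.sum_const, Nat.primesLE_card_eq_primeCounting, nsmul_eq_mul,
    mul_comm (n : ℝ)]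

lemma tendsto_primeCounting_div : Tendsto (fun n : ℕ ↦ (π n : ℝ) / n) atTop (𝓝 0) := by
  have hlog : Tendsto (fun n : ℕ ↦ (log 4 + 1) / log n) atTop (𝓝 0) :=
    (tendsto_log_atTop.comp tendsto_natCast_atTop_atTop).const_div_atTop _
  refine squeeze_zero' (.of_forall fun n ↦ by positivity) ?_ hlog
  filter_upwards [tendsto_natCast_atTop_atTop.eventually (eventually_primeCounting_le one_pos),
    eventually_gt_atTop 0] with n hπ hn
  rw [Nat.floor_natCast] at hπ
  rw [div_le_iff₀ (by positivity)]
  exact hπ.trans_eq (by ring)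

lemma tendsto_log_mul_sum_primesLE_div_sq :
    Tendsto (fun n : ℕ ↦ log n * (∑ p ∈ n.primesLE, (p : ℝ)) / (n : ℝ) ^ 2) atTop
      (𝓝 (1 / 2)) := by
  have hupper := tendsto_sum_primesLE_mul_log_div_sq.add tendsto_primeCounting_div
  rw [add_zero] at hupper
  refine tendsto_of_tendsto_of_tendsto_of_le_of_le' tendsto_sum_primesLE_mul_log_div_sq hupper
    (.of_forall fun n ↦ ?_) ?_
  · gcongr
    exact sum_primesLE_mul_log_le n
  · filter_upwards [eventually_ne_atTop 0] with n hn
    calc log n * (∑ p ∈ n.primesLE, (p : ℝ)) / (n : ℝ) ^ 2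
        ≤ (∑ p ∈ n.primesLE, p * log p + n * π n) / (n : ℝ) ^ 2 := by
          gcongr
          exact log_mul_sum_primesLE_le n
      _ = (∑ p ∈ n.primesLE, p * log p) / (n : ℝ) ^ 2 + π n / n := by field

theorem isEquivalent_sum_primesLE :
    (fun n : ℕ ↦ ∑ p ∈ n.primesLE, (p : ℝ)) ~[atTop] fun n ↦ (n : ℝ) ^ 2 / (2 * log n) := by
  refine isEquivalent_of_tendsto_one ?_
  have h := tendsto_log_mul_sum_primesLE_div_sq.const_mul 2
  rw [mul_one_div_cancel two_ne_zero] at h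
  refine h.congr fun n ↦ ?_
  rw [Pi.div_apply, div_div_eq_mul_div]
  ring

end PrimeSums

section LeastPrimeFactor

open Topology Real Asymptotics

lemma abs_tn_sub_le {k : ℕ} (hk : 1 ≤ k) :
    |(tn k : ℝ) - if k.Prime then (k : ℝ) else 0| ≤ 2 * √k := by
  have hsqrt : 1 ≤ √(k : ℝ) := one_le_sqrt.mpr (by exact_mod_cast hk)
  by_cases hp : k.Prime
  · rw [tn, if_pos hp, if_pos hp, Nat.cast_sub hk, Nat.cast_one, sub_sub_cancel_left, abs_neg,
      abs_one]
    linarith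
  · rw [tn, if_neg hp, if_neg hp, sub_zero, Nat.abs_cast, Nat.cast_mul, Nat.cast_two]
    have hmin : (k.minFac : ℝ) ≤ √k :=
      le_sqrt_of_sq_le (by exact_mod_cast Nat.minFac_sq_le_self hk hp)
    have hpred : ((k.minFac - 1 : ℕ) : ℝ) ≤ k.minFac := by exact_mod_cast Nat.sub_le _ _
    linarith

lemma abs_sum_tn_sub_sum_primesLE_le (n : ℕ) :
    |∑ k ∈ Finset.Icc 2 n, (tn k : ℝ) - ∑ p ∈ n.primesLE, (p : ℝ)| ≤ 2 * (n * √n) := by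
  rw [Nat.primesLE_eq_filter_Icc_two, Finset.sum_filter, ← Finset.sum_sub_distrib]
  calc |∑ k ∈ Finset.Icc 2 n, ((tn k : ℝ) - if k.Prime then (k : ℝ) else 0)|
      ≤ ∑ k ∈ Finset.Icc 2 n, |(tn k : ℝ) - if k.Prime then (k : ℝ) else 0| :=
        Finset.abs_sum_le_sum_abs _ _
    _ ≤ ∑ k ∈ Finset.Icc 2 n, 2 * √n := Finset.sum_le_sum fun k hk ↦ by
        obtain ⟨hk2, hkn⟩ := Finset.mem_Icc.mp hk
        refine (abs_tn_sub_le (one_le_two.trans hk2)).trans ?_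
        gcongr
    _ ≤ n * (2 * √n) := by
        rw [Finset.sum_const, Nat.card_Icc, nsmul_eq_mul]
        gcongr
        omega
    _ = 2 * (n * √n) := by ring

lemma isLittleO_natCast_mul_sqrt :
    (fun n : ℕ ↦ n * √n) =o[atTop] fun n : ℕ ↦ (n : ℝ) ^ 2 / (2 * log n) := by
  have hlog : (fun x : ℝ ↦ 2 * log x) =o[atTop] fun x ↦ √x := by
    simpa only [sqrt_eq_rpow] using
      (isLittleO_log_rpow_atTop (show (0 : ℝ) < 1 / 2 by norm_num)).const_mul_left 2
  have hx : (fun x : ℝ ↦ x * √x) =o[atTop] fun x ↦ x ^ 2 / (2 * log x) := by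
    refine ((isBigO_refl (fun x : ℝ ↦ x * √x / (2 * log x)) atTop).mul_isLittleO hlog).congr' ?_ ?_
    · filter_upwards [eventually_gt_atTop 1] with x hx
      exact div_mul_cancel₀ _ (by have := log_pos hx; positivity)
    · filter_upwards [eventually_ge_atTop 0] with x hx
      rw [div_mul_eq_mul_div, mul_assoc, mul_self_sqrt hx, sq]
  exact hx.comp_tendsto tendsto_natCast_atTop_atTop

theorem isEquivalent_sum_tn :
    (fun n : ℕ ↦ ∑ k ∈ Finset.Icc 2 n, (tn k : ℝ)) ~[atTop]
      fun n ↦ (n : ℝ) ^ 2 / (2 * log n) := by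
  have herr : (fun n : ℕ ↦ ∑ k ∈ Finset.Icc 2 n, (tn k : ℝ) - ∑ p ∈ n.primesLE, (p : ℝ)) =o[atTop]
      fun n : ℕ ↦ (n : ℝ) ^ 2 / (2 * log n) := by
    refine (IsBigO.of_bound 2 (.of_forall fun n ↦ ?_)).trans_isLittleO isLittleO_natCast_mul_sqrt
    rw [norm_of_nonneg (by positivity : 0 ≤ n * √(n : ℝ))]
    exact abs_sum_tn_sub_sum_primesLE_le n
  exact (isEquivalent_sum_primesLE.add_isLittleO herr).congr_left
    (.of_forall fun n ↦ add_sub_cancel _ _)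

lemma tendsto_two_div_sq_sub_mul_sq_div_log :
    Tendsto (fun n : ℕ ↦ 2 / ((n : ℝ) ^ 2 - n) * ((n : ℝ) ^ 2 / (2 * log n))) atTop (𝓝 0) := by
  have hlog : Tendsto (fun n : ℕ ↦ (log n)⁻¹) atTop (𝓝 0) :=
    (tendsto_log_atTop.comp tendsto_natCast_atTop_atTop).inv_tendsto_atTop
  have hinv : Tendsto (fun n : ℕ ↦ (1 - (n : ℝ)⁻¹)⁻¹) atTop (𝓝 1) := by
    simpa using ((tendsto_inv_atTop_nhds_zero_nat (𝕜 := ℝ)).const_sub 1).inv₀ (by simp)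
  have h := hinv.mul hlog
  rw [mul_zero] at h
  refine h.congr' ?_
  filter_upwards [eventually_gt_atTop 1] with n hn
  have hn0 : (n : ℝ) ≠ 0 := by positivity
  rw [show (n : ℝ) ^ 2 - n = (1 - (n : ℝ)⁻¹) * n ^ 2 by field]
  field

end LeastPrimeFactor

theorem partial_sums_asymptotics :
    Tendsto (fun n : ℕ =>
        (∑ k ∈ Finset.Icc 2 n, (tn k : ℝ)) / ((n : ℝ) ^ 2 / (2 * Real.log n)))
      atTop (nhds 1) ∧
    Tendsto (fun n : ℕ =>
        (2 / ((n : ℝ) ^ 2 - n)) * ∑ k ∈ Finset.Icc 2 n, (tn k : ℝ))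
      atTop (nhds 0) := by
  have hne : ∀ᶠ n : ℕ in atTop, (n : ℝ) ^ 2 / (2 * Real.log n) ≠ 0 := by
    filter_upwards [eventually_gt_atTop 1] with n hn
    have := Real.log_pos (Nat.one_lt_cast.mpr hn)
    positivity
  have hdensity := (Asymptotics.IsEquivalent.refl (u := fun n : ℕ ↦ 2 / ((n : ℝ) ^ 2 - n))
    (l := atTop)).mul isEquivalent_sum_tn
  exact ⟨(Asymptotics.isEquivalent_iff_tendsto_one hne).mp isEquivalent_sum_tn,
    hdensity.symm.tendsto_nhds tendsto_two_div_sq_sub_mul_sq_div_log⟩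
end
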